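/- Let N=(P,T,W,M₀) be a Petri net with weighted comparable presets (WPI) solving a finite, reachable, deterministic LTS TS=(S,T,→,s₀), and let a,b∈T be labels with a∥b. Then the presets of a and b are disjoint: •a∩•b=∅. -/

import Mathlib

section Defs

variable {S L P T : Type*}

/-- `enab tr s a` means the label `a` is enabled at state `s`, i.e. `s[a⟩`. -/
def enab (tr : S → L → S → Prop) (s : S) (a : L) : Prop := ∃ s', tr s a s'

/-- The LTS is deterministic. -/
def Deterministic (tr : S → L → S → Prop) : Prop :=
  ∀ s a s' s'', tr s a s' → tr s a s'' → s' = s''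

/-- `Walk tr s σ s'` : a walk from `s` to `s'` labelled by the word `σ`. -/
inductive Walk (tr : S → L → S → Prop) : S → List L → S → Prop
  | nil (s : S) : Walk tr s [] s
  | cons {s s' s'' : S} {a : L} {σ : List L} :
      tr s a s' → Walk tr s' σ s'' → Walk tr s (a :: σ) s''

/-- `s` is reachable from `s₀`. -/
def ReachableState (tr : S → L → S → Prop) (s₀ s : S) : Prop := ∃ σ, Walk tr s₀ σ s

/-- Every state is reachable from the initial state `s₀`. -/
def ReachableLTS (tr : S → L → S → Prop) (s₀ : S) : Prop := ∀ s, ReachableState tr s₀ s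

/-- `a ≡ b` : `a` and `b` are enabled at exactly the same states. -/
def lequiv (tr : S → L → S → Prop) (a b : L) : Prop := ∀ s, enab tr s a ↔ enab tr s b

/-- `a ▷ b` : wherever `a` is enabled so is `b`, and somewhere `b` is enabled but not `a`. -/
def limpl (tr : S → L → S → Prop) (a b : L) : Prop :=
  (∀ s, enab tr s a → enab tr s b) ∧ ∃ s, enab tr s b ∧ ¬ enab tr s a

/-- `a ⋈ b` : `a ▷ b` or `b ▷ a`. -/
def lbowtie (tr : S → L → S → Prop) (a b : L) : Prop := limpl tr a b ∨ limpl tr b a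

/-- `a ∥ b` : somewhere `a` but not `b` is enabled, and somewhere `b` but not `a`. -/
def linter (tr : S → L → S → Prop) (a b : L) : Prop :=
  (∃ s, enab tr s a ∧ ¬ enab tr s b) ∧ (∃ s, enab tr s b ∧ ¬ enab tr s a)

/-- Deactivation relation `a ⊲⊳ b`: one of the labels can deactivate the other. -/
def ldeact (tr : S → L → S → Prop) (a b : L) : Prop :=
  ∃ s s', (enab tr s a ∧ tr s b s' ∧ ¬ enab tr s' a) ∨
          (enab tr s b ∧ tr s a s' ∧ ¬ enab tr s' b)

/-- A Petri net over places `P` and transitions `T`: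
`Wpt p t = W(p,t)`, `Wtp t p = W(t,p)`, `M0` the initial marking. -/
structure PetriNet (P T : Type*) where
  Wpt : P → T → ℕ
  Wtp : T → P → ℕ
  M0 : P → ℕ

/-- A marking `M` enables a transition `t`. -/
def PetriNet.enables (N : PetriNet P T) (M : P → ℕ) (t : T) : Prop :=
  ∀ p, N.Wpt p t ≤ M p

/-- The marking resulting from firing `t` at `M`. -/
def PetriNet.fire (N : PetriNet P T) (M : P → ℕ) (t : T) : P → ℕ :=
  fun p => M p - N.Wpt p t + N.Wtp t p

/-- One firing step between markings. -/
def PetriNet.step (N : PetriNet P T) (M M' : P → ℕ) : Prop :=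
  ∃ t, N.enables M t ∧ M' = N.fire M t

/-- The marking `M` is reachable from the initial marking. -/
def PetriNet.reach (N : PetriNet P T) (M : P → ℕ) : Prop :=
  Relation.ReflTransGen N.step N.M0 M

/-- `N` solves the LTS given by `tr` and initial state `s₀`: there is a bijection `ζ`
from the states onto the reachable markings with `ζ s₀ = M₀` preserving edges both ways. -/
def Solves (N : PetriNet P T) (tr : S → T → S → Prop) (s₀ : S) : Prop :=
  ∃ ζ : S → (P → ℕ),
    Function.Injective ζ ∧
    (∀ M, N.reach M ↔ ∃ s, ζ s = M) ∧
    ζ s₀ = N.M0 ∧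
    ∀ s s' t, tr s t s' ↔ (N.enables (ζ s) t ∧ N.fire (ζ s) t = ζ s')

/-- The preset `•t` of a transition. -/
def PetriNet.preset (N : PetriNet P T) (t : T) : Set P := {p | 0 < N.Wpt p t}

/-- The postset `p^•` of a place. -/
def PetriNet.postset (N : PetriNet P T) (p : P) : Set T := {t | 0 < N.Wpt p t}

/-- `•T'` for a set of transitions `T'`. -/
def PetriNet.presetSet (N : PetriNet P T) (T' : Set T) : Set P :=
  {p | ∃ t ∈ T', 0 < N.Wpt p t}

/-- All arc weights are at most 1. -/
def PetriNet.plain (N : PetriNet P T) : Prop :=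
  ∀ p t, N.Wpt p t ≤ 1 ∧ N.Wtp t p ≤ 1

/-- Weighted comparable presets: transitions with intersecting presets have comparable presets. -/
def PetriNet.WPI (N : PetriNet P T) : Prop :=
  ∀ t t', (N.preset t ∩ N.preset t').Nonempty →
    (∀ p, N.Wpt p t ≤ N.Wpt p t') ∨ (∀ p, N.Wpt p t' ≤ N.Wpt p t)

/-- Weighted asymmetric choice. -/
def PetriNet.WAC (N : PetriNet P T) : Prop :=
  ∀ p p', (N.postset p ∩ N.postset p').Nonempty →
    (∀ t, N.Wpt p t ≤ N.Wpt p' t) ∨ (∀ t, N.Wpt p' t ≤ N.Wpt p t)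

/-- Equal conflict. -/
def PetriNet.EC (N : PetriNet P T) : Prop :=
  ∀ t t', (N.preset t ∩ N.preset t').Nonempty → ∀ p, N.Wpt p t = N.Wpt p t'

/-- Asymmetric choice: weighted asymmetric choice and plain. -/
def PetriNet.AC (N : PetriNet P T) : Prop := N.plain ∧ N.WAC

/-- Block-reduced asymmetric choice. -/
def PetriNet.BRAC (N : PetriNet P T) : Prop :=
  N.plain ∧ ∀ p p', (N.postset p ∩ N.postset p').Nonempty →
    N.postset p = N.postset p' ∨
    ∃ T1 T2 : Set T,
      (N.postset p = T1 ∧ N.postset p' = T1 ∪ T2 ∧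
        N.presetSet T1 = {p, p'} ∧ N.presetSet T2 = {p'}) ∨
      (N.postset p' = T1 ∧ N.postset p = T1 ∪ T2 ∧
        N.presetSet T1 = {p, p'} ∧ N.presetSet T2 = {p})

/-- Reduced asymmetric choice. -/
def PetriNet.RAC (N : PetriNet P T) : Prop :=
  N.plain ∧ ∀ p p', p ≠ p' → (N.postset p ∩ N.postset p').Nonempty →
    ((N.postset p).ncard = 1 ∧ (N.postset p').ncard ≤ 2 ∧
      N.presetSet (N.postset p') = {p, p'}) ∨
    ((N.postset p').ncard = 1 ∧ (N.postset p).ncard ≤ 2 ∧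
      N.presetSet (N.postset p) = {p, p'})

/-- A region `(R,B,F)` of the LTS given by `tr`. -/
def IsRegion (tr : S → L → S → Prop) (R : S → ℕ) (B F : L → ℕ) : Prop :=
  ∀ s a s', tr s a s' → B a ≤ R s ∧ R s' = R s - B a + F a

end Defs

/-! A solution carries each state to a reachable marking enabling the same transitions. If the
presets of `a` and `b` met, WPI would make their weights comparable, and the transition with the
smaller weights would be enabled wherever the other one is, contradicting `a ∥ b`. -/

section

variable {S P T : Type*} {N : PetriNet P T} {tr : S → T → S → Prop} {s₀ : S}

theorem PetriNet.enables.of_Wpt_le {M : P → ℕ} {t t' : T} (hM : N.enables M t')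
    (hle : ∀ p, N.Wpt p t ≤ N.Wpt p t') : N.enables M t :=
  fun p => (hle p).trans (hM p)

theorem PetriNet.reach.fire {M : P → ℕ} {t : T} (hM : N.reach M) (ht : N.enables M t) :
    N.reach (N.fire M t) :=
  Relation.ReflTransGen.tail hM ⟨t, ht, rfl⟩

theorem Solves.exists_enab_iff_enables (hsol : Solves N tr s₀) :
    ∃ ζ : S → P → ℕ, ∀ s t, enab tr s t ↔ N.enables (ζ s) t := by
  obtain ⟨ζ, -, hreach, -, hedge⟩ := hsol
  refine ⟨ζ, fun s t => ⟨fun ⟨s', hs'⟩ => ((hedge s s' t).1 hs').1, fun ht => ?_⟩⟩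
  have hs : N.reach (ζ s) := (hreach _).2 ⟨s, rfl⟩
  obtain ⟨s', hs'⟩ : ∃ s', ζ s' = N.fire (ζ s) t := (hreach _).1 (hs.fire ht)
  exact ⟨s', (hedge s s' t).2 ⟨ht, hs'.symm⟩⟩

theorem Solves.enab_of_Wpt_le (hsol : Solves N tr s₀) {s : S} {t t' : T}
    (hle : ∀ p, N.Wpt p t ≤ N.Wpt p t') (ht' : enab tr s t') : enab tr s t := by
  obtain ⟨ζ, hζ⟩ := hsol.exists_enab_iff_enables
  exact (hζ s t).2 (((hζ s t').1 ht').of_Wpt_le hle)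

theorem interleave_disjoint_presets_general (hwpi : N.WPI) (hsol : Solves N tr s₀) {a b : T}
    (hab : linter tr a b) : N.preset a ∩ N.preset b = ∅ := by
  obtain ⟨⟨s, ha, hnb⟩, ⟨s', hb, hna⟩⟩ := hab
  by_contra hne
  rcases hwpi a b (Set.nonempty_iff_ne_empty.2 hne) with hle | hle
  · exact hna (hsol.enab_of_Wpt_le hle hb)
  · exact hnb (hsol.enab_of_Wpt_le hle ha)

end

/-- Case 2: If a WPI Petri net `N` solves a finite, reachable,
deterministic LTS and `a ∥ b`, then the presets of `a` and `b` are disjoint. -/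
theorem interleave_disjoint_presets
    {S P T : Type*} [Fintype S] [Fintype P] [Fintype T]
    (tr : S → T → S → Prop) (s₀ : S)
    (hdet : Deterministic tr) (hreach : ReachableLTS tr s₀)
    (N : PetriNet P T) (hwpi : N.WPI) (hsol : Solves N tr s₀)
    (a b : T) (hab : linter tr a b) :
    N.preset a ∩ N.preset b = ∅ :=
  interleave_disjoint_presets_general hwpi hsol hab
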